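/- arXiv:1003.5894 — 2 statements merged into one kernel-verified Lean document; each statement's English description precedes it below -/
import Mathlib

section
/- Let k be a field, r ≥ 1, and n₁,…,n_r positive integers with N = n₁ + ⋯ + n_r. Let L = k(x₁,…,x_N), let G = S_{n₁} × ⋯ × S_{n_r} act on L by permuting the variables in consecutive blocks of sizes n₁,…,n_r, and let K = L^G. For each i set m_i = n₁ + ⋯ + n_{i-1} + 1 and L_i = K(x_{m_i}) ⊆ L, and set s₁ = x₁ + ⋯ + x_N ∈ K. Let p be a prime, let 1 ≤ s ≤ r be such that p divides n₁,…,n_s, and let d₁,…,d_s be integers with d₁ not divisible by p. Then there do not exist elements a₁,…,a_r ∈ Kˣ and b₁ ∈ L₁ˣ, …, b_r ∈ L_rˣ such that a₁ = s₁ · N_{L₁/K}(b₁), a_i = N_{L_i/K}(b_i) for all 2 ≤ i ≤ r, and a₁^{d₁} ⋯ a_s^{d_s} ∈ (Kˣ)^p. -/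
/-- The starting index (0-based) of the `i`-th block of consecutive variables,
for blocks of sizes `n 0, n 1, …` (so block `i` starts at `n 0 + ⋯ + n (i-1)`). -/
def blockStart {r : ℕ} (n : Fin r → ℕ) (i : Fin r) : ℕ := ∑ j ∈ Finset.Iio i, n j

/-- The embedding of `S_{n 0} × ⋯ × S_{n (r-1)}` into the symmetric group of
`Fin N`, via a block decomposition `e : (Σ i, Fin (n i)) ≃ Fin N`: the `i`-th
factor permutes the `i`-th block of variables. -/
def blockPermHom {r : ℕ} (n : Fin r → ℕ) (N : ℕ) (e : ((i : Fin r) × Fin (n i)) ≃ Fin N) :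
    ((i : Fin r) → Equiv.Perm (Fin (n i))) →* Equiv.Perm (Fin N) where
  toFun g := (e.symm.trans (Equiv.sigmaCongrRight g)).trans e
  map_one' := by
    ext j
    simp
  map_mul' g h := by
    ext j
    rcases hj : e.symm j with ⟨i, x⟩
    simp [Equiv.Perm.mul_apply, hj]

/-!
The total degree extends to a homomorphism `deg : Lˣ → ℤ` that is invariant under permutations of
the variables. All conjugates of `b_i` over `K` have the same degree, so
`deg N_{L_i/K}(b_i) = [L_i : K] * deg b_i`, and `[L_i : K]` is the size `n_i` of the orbit of
`x_{m_i}`. Modulo `p` this gives `deg a₁ ≡ deg s₁ = 1` and `deg a_i ≡ 0` for `2 ≤ i ≤ s`, hence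
`deg (a₁^{d₁} ⋯ a_s^{d_s}) ≡ d₁`, whereas the degree of a `p`-th power is divisible by `p`.
-/

section GaloisGroup

open IntermediateField Module

variable {G K L : Type*} [Group G] [Finite G] [Field K] [Field L] [Algebra K L]
  [MulSemiringAction G L] [IsGaloisGroup G K L]

variable (G) in
theorem finrank_adjoin_simple_eq_ncard_orbit (x : L) :
    finrank K K⟮x⟯ = (MulAction.orbit G x).ncard := by
  have : IsGalois K L := IsGaloisGroup.isGalois G K L
  have horbit : MulAction.orbit Gal(L/K) x = MulAction.orbit G x := by
    ext y
    simp only [MulAction.mem_orbit_iff, (IsGaloisGroup.mulEquivAlgEquiv G K L).surjective.exists,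
      AlgEquiv.smul_def, IsGaloisGroup.mulEquivAlgEquiv_apply_apply]
  have hstab : K⟮x⟯.fixingSubgroup = MulAction.stabilizer Gal(L/K) x := by
    ext τ
    simpa using forall_mem_adjoin_smul_eq_self_iff K (S := {x}) τ
  rw [finrank_eq_fixingSubgroup_index, hstab, MulAction.index_stabilizer, horbit]

theorem map_eq_of_mem_aroots_minpoly {α : Type*} {w : L → α}
    (hw : ∀ (g : G) (x : L), w (g • x) = w x) {x y : L} (hy : y ∈ (minpoly K x).aroots L) :
    w y = w x := by
  have : IsGalois K L := IsGaloisGroup.isGalois G K L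
  obtain ⟨τ, rfl⟩ := minpoly.exists_algEquiv_of_root' (Algebra.IsAlgebraic.isAlgebraic x)
    (Polynomial.mem_aroots'.1 hy).2
  obtain ⟨g, rfl⟩ := (IsGaloisGroup.mulEquivAlgEquiv G K L).surjective τ
  exact hw g x

theorem map_norm_eq_pow_finrank {M : Type*} [CommMonoid M] {w : L →* M}
    (hw : ∀ (g : G) (x : L), w (g • x) = w x) (F : IntermediateField K L) (b : F) :
    w (algebraMap K L (Algebra.norm K b)) = w b ^ finrank K F := by
  have : IsGalois K L := IsGaloisGroup.isGalois G K L
  have : FiniteDimensional K L := IsGaloisGroup.finiteDimensional G K L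
  have hb : minpoly K b = minpoly K (b : L) := F.minpoly_eq b
  have hsplits : ((minpoly K b).map (algebraMap K L)).Splits := hb ▸ IsGalois.splits K (b : L)
  have hroots (y : L) (hy : y ∈ (minpoly K b).aroots L) : w y = w b :=
    map_eq_of_mem_aroots_minpoly hw (hb ▸ hy)
  have hprod : w ((minpoly K b).aroots L).prod = w b ^ (minpoly K b).natDegree := by
    rw [map_multiset_prod, Multiset.map_congr rfl hroots, Multiset.map_const',
      Multiset.prod_replicate, Polynomial.aroots_def, ← hsplits.natDegree_eq_card_roots,
      Polynomial.natDegree_map]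
  rw [Algebra.norm_eq_prod_roots L hsplits, map_pow, hprod, ← pow_mul,
    ← adjoin.finrank (Algebra.IsIntegral.isIntegral b), finrank_mul_finrank]

end GaloisGroup

theorem zpow_mem_of_prod_zpow_mem {A ι : Type*} [CommGroup A] (P : Subgroup A) {S : Finset ι}
    {i₀ : ι} (hi₀ : i₀ ∈ S) {a : ι → A} (ha : ∀ i ∈ S, i ≠ i₀ → a i ∈ P) {d : ι → ℤ}
    (hprod : ∏ i ∈ S, a i ^ d i ∈ P) : a i₀ ^ d i₀ ∈ P := by
  classical
  rw [← Finset.mul_prod_erase S _ hi₀] at hprod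
  refine (P.mul_mem_cancel_right (P.prod_mem fun i hi => ?_)).1 hprod
  exact P.zpow_mem (ha i (Finset.mem_of_mem_erase hi) (Finset.ne_of_mem_erase hi)) _

section LogDvd

open Module WithZero

/-- The group of units at which an integer-valued multiplicative map `v` takes a value
divisible by `m`. The value group is written `ℤᵐ⁰`, so the integer in question is `log (v u)`. -/
def logDvdSubgroup {K : Type*} [GroupWithZero K] (v : K →*₀ ℤᵐ⁰) (m : ℤ) : Subgroup Kˣ where
  carrier := {u | m ∣ log (v u)}
  one_mem' := by simp
  mul_mem' {x y} hx hy := by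
    rw [Set.mem_ofPred_eq, Units.val_mul, map_mul, log_mul (by simp) (by simp)]
    exact dvd_add hx hy
  inv_mem' {x} hx := by simpa using hx

theorem mem_logDvdSubgroup {K : Type*} [GroupWithZero K] {v : K →*₀ ℤᵐ⁰} {m : ℤ} {u : Kˣ} :
    u ∈ logDvdSubgroup v m ↔ m ∣ log (v u) :=
  Iff.rfl

theorem dvd_mul_log_of_prod_zpow_eq_pow {G K L ι : Type*} [Group G] [Finite G] [Field K] [Field L]
    [Algebra K L] [MulSemiringAction G L] [IsGaloisGroup G K L] {w : L →*₀ ℤᵐ⁰}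
    (hw : ∀ (g : G) (x : L), w (g • x) = w x) {F : ι → IntermediateField K L} {S : Finset ι}
    {i₀ : ι} (hi₀ : i₀ ∈ S) {p : ℕ} (hF : ∀ i ∈ S, p ∣ finrank K (F i)) {s : L} {a : ι → Kˣ}
    {b : ∀ i, (F i)ˣ}
    (h₀ : algebraMap K L (a i₀) = s * algebraMap K L (Algebra.norm K (b i₀ : F i₀)))
    (h : ∀ i ∈ S, i ≠ i₀ → (a i : K) = Algebra.norm K (b i : F i)) {d : ι → ℤ} {c : Kˣ}
    (hc : ∏ i ∈ S, a i ^ d i = c ^ p) : (p : ℤ) ∣ d i₀ * log (w s) := by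
  let v : K →*₀ ℤᵐ⁰ := w.comp (algebraMap K L).toMonoidWithZeroHom
  have hnorm (i : ι) : v (Algebra.norm K (b i : F i)) = w (b i : F i) ^ finrank K (F i) :=
    map_norm_eq_pow_finrank (w := (w : L →* ℤᵐ⁰)) hw (F i) (b i)
  have hdvd (i : ι) (hi : i ∈ S) : (p : ℤ) ∣ log (v (Algebra.norm K (b i : F i))) := by
    rw [hnorm, log_pow, nsmul_eq_mul]
    exact (Int.natCast_dvd_natCast.2 (hF i hi)).mul_right _
  have hpow : c ^ p ∈ logDvdSubgroup v p := by simp [mem_logDvdSubgroup]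
  have hmem : a i₀ ^ d i₀ ∈ logDvdSubgroup v p :=
    zpow_mem_of_prod_zpow_mem _ hi₀
      (fun i hi hne => mem_logDvdSubgroup.2 (h i hi hne ▸ hdvd i hi)) (hc ▸ hpow)
  have hs : w s ≠ 0 := by
    rw [map_ne_zero]
    rintro rfl
    simp at h₀
  have hlog : log (v (a i₀)) = log (w s) + log (v (Algebra.norm K (b i₀ : F i₀))) := by
    rw [← log_mul hs (by simp [hnorm])]
    exact congrArg log ((congrArg w h₀).trans (map_mul w _ _))
  rw [mem_logDvdSubgroup, Units.val_zpow_eq_zpow_val, map_zpow₀, log_zpow, smul_eq_mul, hlog,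
    mul_add] at hmem
  exact (dvd_add_left ((hdvd i₀ hi₀).mul_left _)).1 hmem

end LogDvd

theorem algHom_algebraMap_eq_algebraMap_rename {σ R A : Type*} [CommSemiring R]
    [CommSemiring A] [Algebra R A] [Algebra (MvPolynomial σ R) A]
    [IsScalarTower R (MvPolynomial σ R) A] {φ : A →ₐ[R] A} {π : σ → σ}
    (hφ : ∀ j, φ (algebraMap (MvPolynomial σ R) A (MvPolynomial.X j)) =
      algebraMap (MvPolynomial σ R) A (MvPolynomial.X (π j))) (f : MvPolynomial σ R) :
    φ (algebraMap (MvPolynomial σ R) A f) =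
      algebraMap (MvPolynomial σ R) A (MvPolynomial.rename π f) := by
  have h : φ.comp (IsScalarTower.toAlgHom R (MvPolynomial σ R) A) =
      (IsScalarTower.toAlgHom R (MvPolynomial σ R) A).comp (MvPolynomial.rename π) := by
    ext j
    simp [hφ]
  exact DFunLike.congr_fun h f

section Degree

open MvPolynomial WithZero

variable (σ R L : Type*) [CommRing R] [IsDomain R] [Field L] [Algebra (MvPolynomial σ R) L]
  [IsFractionRing (MvPolynomial σ R) L]

open Classical in
/-- The total degree of a polynomial, as a multiplicative map to `ℤᵐ⁰`; the zero polynomial is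
sent to `0`. -/
noncomputable def totalDegreeHom : MvPolynomial σ R →*₀ ℤᵐ⁰ where
  toFun f := if f = 0 then 0 else exp (f.totalDegree : ℤ)
  map_zero' := if_pos rfl
  map_one' := by simp
  map_mul' f g := by
    rcases eq_or_ne f 0 with rfl | hf
    · simp
    rcases eq_or_ne g 0 with rfl | hg
    · simp
    simp [hf, hg, totalDegree_mul_of_isDomain hf hg, exp_add]

variable {σ R}

theorem totalDegreeHom_apply {f : MvPolynomial σ R} (hf : f ≠ 0) :
    totalDegreeHom σ R f = exp (f.totalDegree : ℤ) :=
  if_neg hf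

theorem totalDegreeHom_rename (π : Equiv.Perm σ) (f : MvPolynomial σ R) :
    totalDegreeHom σ R (rename π f) = totalDegreeHom σ R f := by
  rcases eq_or_ne f 0 with rfl | hf
  · simp only [map_zero]
  have hπ : rename π f ≠ 0 := (map_ne_zero_iff _ (rename_injective π π.injective)).2 hf
  rw [totalDegreeHom_apply hf, totalDegreeHom_apply hπ]
  exact congrArg (fun n : ℕ => exp (n : ℤ)) (totalDegree_renameEquiv π f)

theorem isUnit_totalDegreeHom (f : nonZeroDivisors (MvPolynomial σ R)) :
    IsUnit (totalDegreeHom σ R f) := by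
  rw [totalDegreeHom_apply (nonZeroDivisors.coe_ne_zero f)]
  exact exp_ne_zero.isUnit

variable (σ R)

/-- The degree of a rational function, `deg (f / g) = deg f - deg g`, as a multiplicative map to
`ℤᵐ⁰` on any field of fractions `L` of the polynomial ring. -/
noncomputable def rationalDegree : L →*₀ ℤᵐ⁰ :=
  (IsLocalization.toLocalizationMap (nonZeroDivisors (MvPolynomial σ R)) L).lift₀
    (totalDegreeHom σ R) isUnit_totalDegreeHom

variable {σ R}

theorem rationalDegree_algebraMap (f : MvPolynomial σ R) :
    rationalDegree σ R L (algebraMap (MvPolynomial σ R) L f) = totalDegreeHom σ R f :=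
  Submonoid.LocalizationMap.lift_eq _ isUnit_totalDegreeHom f

variable {L} [Algebra R L] [IsScalarTower R (MvPolynomial σ R) L]

theorem rationalDegree_map_of_perm {φ : L →ₐ[R] L} {π : Equiv.Perm σ}
    (hφ : ∀ j, φ (algebraMap (MvPolynomial σ R) L (X j)) =
      algebraMap (MvPolynomial σ R) L (X (π j))) (x : L) :
    rationalDegree σ R L (φ x) = rationalDegree σ R L x := by
  have hpoly (f : MvPolynomial σ R) : rationalDegree σ R L (φ (algebraMap _ L f)) =
      rationalDegree σ R L (algebraMap _ L f) := by
    rw [algHom_algebraMap_eq_algebraMap_rename hφ, rationalDegree_algebraMap,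
      rationalDegree_algebraMap, totalDegreeHom_rename]
  obtain ⟨f, g, -, rfl⟩ := IsFractionRing.div_surjective (A := MvPolynomial σ R) x
  rw [map_div₀, map_div₀, map_div₀, hpoly, hpoly]

end Degree

theorem totalDegree_sum_X (σ R : Type*) [Fintype σ] [Nonempty σ] [CommSemiring R] [Nontrivial R] :
    (∑ j, MvPolynomial.X j : MvPolynomial σ R).totalDegree = 1 := by
  classical
  refine (MvPolynomial.IsHomogeneous.sum _ _ 1 fun j _ =>
    MvPolynomial.isHomogeneous_X R j).totalDegree fun h => ?_
  obtain ⟨j⟩ := ‹Nonempty σ›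
  simpa [Pi.single_apply] using congrArg (MvPolynomial.eval (Pi.single j 1)) h

instance isGaloisGroup_fixedField {k L : Type*} [Field k] [Field L] [Algebra k L]
    (G : Subgroup (L ≃ₐ[k] L)) : IsGaloisGroup G (IntermediateField.fixedField G) L where
  faithful := inferInstance
  commutes := ⟨fun g x y => by
    simpa [Algebra.smul_def] using .inl ((IntermediateField.mem_fixedField_iff G _).1 x.2 g g.2)⟩
  isInvariant := ⟨fun x hx => ⟨⟨x, hx⟩, rfl⟩⟩

section Block

open IntermediateField Module MvPolynomial

variable {r : ℕ} {n : Fin r → ℕ} {N : ℕ} {e : ((i : Fin r) × Fin (n i)) ≃ Fin N}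

theorem blockPermHom_apply (g : (i : Fin r) → Equiv.Perm (Fin (n i))) (i : Fin r)
    (j : Fin (n i)) : blockPermHom n N e g (e ⟨i, j⟩) = e ⟨i, g i j⟩ := by
  simp [blockPermHom]

theorem range_blockPermHom_apply (i : Fin r) (j : Fin (n i)) :
    Set.range (fun g => blockPermHom n N e g (e ⟨i, j⟩)) = Set.range fun j' => e ⟨i, j'⟩ := by
  simp only [blockPermHom_apply]
  refine Set.Subset.antisymm (Set.range_subset_iff.2 fun g => ⟨g i j, rfl⟩)
    (Set.range_subset_iff.2 fun j' => ⟨Function.update 1 i (Equiv.swap j j'), ?_⟩)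
  simp

variable {k L : Type*} [Field k] [Field L] [Algebra k L] [Algebra (MvPolynomial (Fin N) k) L]
  {ρ : Equiv.Perm (Fin N) →* (L ≃ₐ[k] L)}

theorem orbit_blockVariable
    (hρ : ∀ (π : Equiv.Perm (Fin N)) (j : Fin N),
      ρ π (algebraMap (MvPolynomial (Fin N) k) L (X j)) =
        algebraMap (MvPolynomial (Fin N) k) L (X (π j))) (i : Fin r) (j : Fin (n i)) :
    MulAction.orbit (ρ.comp (blockPermHom n N e)).range
        (algebraMap (MvPolynomial (Fin N) k) L (X (e ⟨i, j⟩))) =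
      Set.range fun j' : Fin (n i) => algebraMap (MvPolynomial (Fin N) k) L (X (e ⟨i, j'⟩)) := by
  have horbit : MulAction.orbit (ρ.comp (blockPermHom n N e)).range
        (algebraMap (MvPolynomial (Fin N) k) L (X (e ⟨i, j⟩))) =
      Set.range fun g => ρ (blockPermHom n N e g)
        (algebraMap (MvPolynomial (Fin N) k) L (X (e ⟨i, j⟩))) :=
    ((ρ.comp (blockPermHom n N e)).rangeRestrict_surjective.range_comp fun g =>
      g • algebraMap (MvPolynomial (Fin N) k) L (X (e ⟨i, j⟩))).symm
  simp only [horbit, hρ]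
  rw [Set.range_comp' (fun l => algebraMap (MvPolynomial (Fin N) k) L (X l)),
    range_blockPermHom_apply, ← Set.range_comp']

theorem finrank_adjoin_blockVariable [IsFractionRing (MvPolynomial (Fin N) k) L]
    (hρ : ∀ (π : Equiv.Perm (Fin N)) (j : Fin N),
      ρ π (algebraMap (MvPolynomial (Fin N) k) L (X j)) =
        algebraMap (MvPolynomial (Fin N) k) L (X (π j))) (i : Fin r) (j : Fin (n i)) :
    finrank (fixedField (ρ.comp (blockPermHom n N e)).range)
      (adjoin (fixedField (ρ.comp (blockPermHom n N e)).range)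
        {algebraMap (MvPolynomial (Fin N) k) L (X (e ⟨i, j⟩))}) = n i := by
  have : Finite (ρ.comp (blockPermHom n N e)).range := Set.finite_range (ρ.comp _)
  have hinj : Function.Injective fun j' : Fin (n i) =>
      algebraMap (MvPolynomial (Fin N) k) L (X (e ⟨i, j'⟩)) :=
    (IsFractionRing.injective _ L).comp
      (X_injective.comp (e.injective.comp sigma_mk_injective))
  rw [finrank_adjoin_simple_eq_ncard_orbit (ρ.comp (blockPermHom n N e)).range,
    orbit_blockVariable hρ, ← Set.image_univ, Set.ncard_image_of_injective _ hinj,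
    Set.ncard_univ, Nat.card_fin]

end Block

section General

open IntermediateField Module MvPolynomial

theorem block_norm_class_not_p_th_power_general {k σ ι L : Type*} [Field k] [Field L]
    [Algebra k L] [Algebra (MvPolynomial σ k) L] [IsScalarTower k (MvPolynomial σ k) L]
    [IsFractionRing (MvPolynomial σ k) L] {G : Subgroup (L ≃ₐ[k] L)} [Finite G]
    (hG : ∀ g ∈ G, ∃ π : Equiv.Perm σ, ∀ j,
      g (algebraMap (MvPolynomial σ k) L (X j)) = algebraMap (MvPolynomial σ k) L (X (π j)))
    {F : ι → IntermediateField (fixedField G) L} {S : Finset ι} {i₀ : ι} (hi₀ : i₀ ∈ S) {p : ℕ}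
    (hF : ∀ i ∈ S, p ∣ finrank (fixedField G) (F i))
    {f : MvPolynomial σ k} {d : ι → ℤ} (hd : ¬ (p : ℤ) ∣ d i₀ * f.totalDegree)
    {a : ι → (fixedField G)ˣ} {b : ∀ i, (F i)ˣ}
    (h₀ : ((a i₀ : fixedField G) : L) = algebraMap (MvPolynomial σ k) L f *
      (Algebra.norm (fixedField G) (b i₀ : F i₀) : fixedField G))
    (h : ∀ i ∈ S, i ≠ i₀ → (a i : fixedField G) = Algebra.norm (fixedField G) (b i : F i))
    (c : (fixedField G)ˣ) : ∏ i ∈ S, a i ^ d i ≠ c ^ p := by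
  intro hc
  have hinv (g : G) (x : L) : rationalDegree σ k L (g • x) = rationalDegree σ k L x := by
    obtain ⟨π, hπ⟩ := hG g g.2
    exact rationalDegree_map_of_perm (φ := ((g : L ≃ₐ[k] L) : L →ₐ[k] L)) hπ x
  have hf : f ≠ 0 := by
    rintro rfl
    simp at hd
  have hdvd := dvd_mul_log_of_prod_zpow_eq_pow hinv hi₀ hF h₀ h hc
  rw [rationalDegree_algebraMap, totalDegreeHom_apply hf, WithZero.log_exp] at hdvd
  exact hd hdvd

end General

/-- In the block situation (`L = k(x₁,…,x_N)`,
`G = S_{n₁} × ⋯ × S_{n_r}` acting by permuting the variables in consecutive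
blocks of sizes `n₁,…,n_r`, `K = L^G`, `L_i = K(x_{m_i})` with
`m_i = n₁ + ⋯ + n_{i-1} + 1`), set `s₁ = x₁ + ⋯ + x_N ∈ K`.  Let `p` be a
prime, let `1 ≤ s ≤ r` be such that `p` divides `n₁,…,n_s`, and let
`d₁,…,d_s` be integers with `d₁` not divisible by `p`.  Then there do not
exist elements `a₁,…,a_r ∈ Kˣ` and `b₁ ∈ L₁ˣ, …, b_r ∈ L_rˣ` such that
`a₁ = s₁ · N_{L₁/K}(b₁)`, `a_i = N_{L_i/K}(b_i)` for all `2 ≤ i ≤ r`, and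
`a₁^{d₁} ⋯ a_s^{d_s} ∈ (Kˣ)^p`. -/
theorem block_norm_class_not_p_th_power (k : Type*) [Field k]
    (r : ℕ) (hr : 1 ≤ r) (n : Fin r → ℕ) (hn : ∀ i, 1 ≤ n i)
    (N : ℕ) (hN : N = ∑ i, n i)
    (e : ((i : Fin r) × Fin (n i)) ≃ Fin N)
    (he : ∀ (i : Fin r) (j : Fin (n i)), ((e ⟨i, j⟩ : Fin N) : ℕ) = blockStart n i + (j : ℕ))
    (ρ : Equiv.Perm (Fin N) →*
      (FractionRing (MvPolynomial (Fin N) k) ≃ₐ[k] FractionRing (MvPolynomial (Fin N) k)))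
    (hρ : ∀ (π : Equiv.Perm (Fin N)) (j : Fin N),
      ρ π (algebraMap (MvPolynomial (Fin N) k) (FractionRing (MvPolynomial (Fin N) k))
          (MvPolynomial.X j)) =
        algebraMap (MvPolynomial (Fin N) k) (FractionRing (MvPolynomial (Fin N) k))
          (MvPolynomial.X (π j)))
    (p : ℕ) (hp : p.Prime) (s : ℕ) (hs : 1 ≤ s) (hsr : s ≤ r)
    (hdvd : ∀ i : Fin r, (i : ℕ) < s → p ∣ n i)
    (dd : Fin r → ℤ) (hd1 : ¬ (p : ℤ) ∣ dd ⟨0, lt_of_lt_of_le hs hsr⟩) :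
    let L := FractionRing (MvPolynomial (Fin N) k)
    let G : Subgroup (L ≃ₐ[k] L) := (ρ.comp (blockPermHom n N e)).range
    let K : IntermediateField k L := IntermediateField.fixedField G
    let Li : Fin r → IntermediateField K L := fun i => IntermediateField.adjoin K
      {algebraMap (MvPolynomial (Fin N) k) L (MvPolynomial.X (e ⟨i, ⟨0, hn i⟩⟩))}
    let s₁ : L := algebraMap (MvPolynomial (Fin N) k) L (∑ j : Fin N, MvPolynomial.X j)
    let i₀ : Fin r := ⟨0, lt_of_lt_of_le hs hsr⟩
    ¬ ∃ (a : Fin r → (↥K)ˣ) (b : (i : Fin r) → (↥(Li i))ˣ),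
        ((a i₀ : ↥K) : L) = s₁ * ((Algebra.norm K ((b i₀ : ↥(Li i₀))) : ↥K) : L) ∧
        (∀ i : Fin r, i ≠ i₀ →
          ((a i : ↥K) : L) = ((Algebra.norm K ((b i : ↥(Li i))) : ↥K) : L)) ∧
        ∃ c : (↥K)ˣ,
          (∏ i ∈ Finset.univ.filter (fun i : Fin r => (i : ℕ) < s), a i ^ dd i) = c ^ p := by
  intro L G K Li s₁ i₀
  rintro ⟨a, b, h₀, h, c, hc⟩
  have : Finite G := Set.finite_range (ρ.comp (blockPermHom n N e))
  have : Nonempty (Fin N) := ⟨e ⟨i₀, ⟨0, hn i₀⟩⟩⟩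
  have hperm (g : L ≃ₐ[k] L) (hg : g ∈ G) : ∃ π : Equiv.Perm (Fin N), ∀ j,
      g (algebraMap (MvPolynomial (Fin N) k) L (MvPolynomial.X j)) =
        algebraMap (MvPolynomial (Fin N) k) L (MvPolynomial.X (π j)) := by
    obtain ⟨g, rfl⟩ := hg
    exact ⟨blockPermHom n N e g, hρ _⟩
  have hrank (i : Fin r) : Module.finrank K (Li i) = n i := finrank_adjoin_blockVariable hρ i _
  have hi₀ : i₀ ∈ Finset.univ.filter fun i : Fin r => (i : ℕ) < s :=
    Finset.mem_filter.2 ⟨Finset.mem_univ _, hs⟩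
  refine block_norm_class_not_p_th_power_general hperm hi₀
    (fun i hi => hrank i ▸ hdvd i (by simpa using hi)) ?_ h₀ (fun i _ hne => Subtype.ext (h i hne))
    c hc
  simpa [totalDegree_sum_X] using hd1
end

section
/- Let k be a field, K a separable field extension of k with [K:k] = 2, and D a finite-dimensional central division algebra over K with dim_K D = r². Suppose σ : D → D is an involution of the second kind: σ is additive, satisfies σ(xy) = σ(y)σ(x) for all x, y ∈ D and σ(σ(x)) = x for all x ∈ D, maps K to K, fixes k pointwise, and does not fix K pointwise. Then there exists a finite separable field extension F of k such that L := K ⊗_k F is a field and the L-algebra D ⊗_K L is isomorphic to the matrix algebra M_r(L) of r × r matrices over L. -/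
open scoped TensorProduct

attribute [local instance] Algebra.TensorProduct.rightAlgebra

/-!
Let `F` be maximal among the subalgebras of `D` whose elements are all fixed by `σ` and separable
over `k`. Symmetric elements whose product is symmetric commute, so `F` is a field. By maximality,
every symmetric element of the centralizer `C` of `F` has its `q ^ n`-th power in `F`, where `q` is
the characteristic exponent of `k` and `n = [D : k]`. Choose `α` in `K` with `σ α ≠ α`. Each element
of `C` is `s + t α` with `s` and `t` symmetric, and `(s + t c) ^ q ^ n` is central in `C` for all
`c` in `k`; if `k` is infinite, the polynomial `(s + t X) ^ q ^ n` thus has central coefficients, so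
`(s + t α) ^ q ^ n` is central too. Hence `C` is purely inseparable over its center, and commutative
by the Jacobson–Noether theorem; if `k` is finite, it is commutative by Wedderburn's theorem.

Since `σ` fixes `F` and moves `α`, the subfields `K` and `F` of `D` are linearly disjoint over `k`,
and `L = K ⊗ F` is a subfield of `D` with commutative centralizer. Then `D` is a faithful simple
module over `D ⊗ L`, whose center is `L`, and its endomorphism ring is commutative. By the
Jacobson density theorem these endomorphisms are scalars in `L`, and `D ⊗ L` is the ring of all
`L`-linear endomorphisms of `D`.
-/

section SimpleModule

variable {S A M : Type*} [Field S] [Ring A] [Algebra S A] [AddCommGroup M] [Module S M]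
  [Module A M] [IsScalarTower S A M] [IsSimpleModule A M] [FiniteDimensional S M]

theorem exists_forall_eq_smul_of_commute_end (f : Module.End S M)
    (hf : ∀ (g : Module.End A M) (x : M), f (g x) = g (f x)) : ∃ a : A, ∀ x, f x = a • x := by
  classical
  let f' : Module.End (Module.End A M) M := { toFun := f, map_add' := map_add f, map_smul' := hf }
  let b := Module.finBasis S M
  obtain ⟨a, ha⟩ := jacobson_density (R := A) f' (Finset.univ.image b)
  refine ⟨a, fun x ↦ ?_⟩
  have : f = Algebra.lsmul S S M a := b.ext fun i ↦ ha (b i) (by simp)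
  exact congr($this x)

variable [FaithfulSMul A M] [Algebra.IsCentral S A]

theorem lsmul_bijective_of_commute_end (hcomm : ∀ f g : Module.End A M, Commute f g) :
    Function.Bijective (Algebra.lsmul S S M : A →ₐ[S] Module.End S M) := by
  refine ⟨fun a b hab ↦ eq_of_smul_eq_smul fun x : M ↦ congr($hab x), fun f ↦ ?_⟩
  have hscalar (g : Module.End A M) : ∃ c : S, ∀ x, g x = c • x := by
    obtain ⟨a, ha⟩ := exists_forall_eq_smul_of_commute_end (A := A) (g.restrictScalars S)
      fun h x ↦ congr($((hcomm g h).eq) x)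
    replace ha (x : M) : g x = a • x := ha x
    have hcenter : a ∈ Subalgebra.center S A := Subalgebra.mem_center_iff.mpr fun b ↦
      eq_of_smul_eq_smul fun x : M ↦ by rw [mul_smul, mul_smul, ← ha, ← ha, map_smul]
    obtain ⟨c, rfl⟩ := Algebra.IsCentral.mem_center_iff S |>.mp hcenter
    exact ⟨c, fun x ↦ by rw [ha, algebraMap_smul]⟩
  obtain ⟨a, ha⟩ := exists_forall_eq_smul_of_commute_end (A := A) f fun g x ↦ by
    obtain ⟨c, hc⟩ := hscalar g
    rw [hc, hc, map_smul]
  exact ⟨a, LinearMap.ext fun x ↦ (ha x).symm⟩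

theorem nonempty_algEquiv_matrix_of_commute_end (hcomm : ∀ f g : Module.End A M, Commute f g)
    {r : ℕ} (hr : Module.finrank S A = r ^ 2) : Nonempty (A ≃ₐ[S] Matrix (Fin r) (Fin r) S) := by
  let e : A ≃ₐ[S] Module.End S M :=
    .ofBijective (Algebra.lsmul S S M) (lsmul_bijective_of_commute_end hcomm)
  have hM : Module.finrank S M = r := by
    have : Module.finrank S M ^ 2 = r ^ 2 := by
      rw [← hr, e.toLinearEquiv.finrank_eq, Module.finrank_linearMap, sq]
    exact Nat.pow_left_injective two_ne_zero this
  exact ⟨e.trans (LinearMap.toMatrixAlgEquiv (Module.finBasisOfFinrankEq S M hM))⟩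

end SimpleModule

theorem isSimpleModule_tensorProduct_mulOpposite (K A : Type*) [CommRing K] [Ring A] [Algebra K A]
    [IsSimpleRing A] :
    letI := instModuleTensorProductMop K A
    IsSimpleModule (A ⊗[K] Aᵐᵒᵖ) A := by
  let := instModuleTensorProductMop K A
  have tmul_smul (a : A) (b : Aᵐᵒᵖ) (x : A) : (a ⊗ₜ[K] b) • x = a * (x * b.unop) := rfl
  refine (isSimpleModule_iff ..).mpr ⟨fun N ↦ ?_⟩
  let I : TwoSidedIdeal A := .mk' N N.zero_mem N.add_mem N.neg_mem
    (fun {a x} hx ↦ by simpa [tmul_smul] using N.smul_mem (a ⊗ₜ 1) hx)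
    (fun {x b} hx ↦ by simpa [tmul_smul] using N.smul_mem (1 ⊗ₜ .op b) hx)
  have hI (x : A) : x ∈ I ↔ x ∈ N := TwoSidedIdeal.mem_mk' ..
  refine (eq_bot_or_eq_top I).imp (fun h ↦ ?_) (fun h ↦ ?_)
  · exact (Submodule.eq_bot_iff N).mpr fun x hx ↦ (TwoSidedIdeal.mem_bot A).mp (h ▸ (hI x).mpr hx)
  · exact Submodule.eq_top_iff'.mpr fun x ↦ (hI x).mp (h ▸ trivial)

theorem isAzumaya_of_isCentral_of_isSimpleRing (K A : Type*) [Field K] [Ring A] [Algebra K A]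
    [Algebra.IsCentral K A] [IsSimpleRing A] [FiniteDimensional K A] : IsAzumaya K A := by
  let := instModuleTensorProductMop K A
  have := isSimpleModule_tensorProduct_mulOpposite K A
  have smul_eq (t : A ⊗[K] Aᵐᵒᵖ) (x : A) : t • x = AlgHom.mulLeftRight K A t x := rfl
  have : IsScalarTower K (A ⊗[K] Aᵐᵒᵖ) A := ⟨fun c t x ↦ by simp [smul_eq]⟩
  have hsurj : Function.Surjective (AlgHom.mulLeftRight K A) := fun f ↦ by
    obtain ⟨t, ht⟩ := exists_forall_eq_smul_of_commute_end (A := A ⊗[K] Aᵐᵒᵖ) f fun g x ↦ by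
      have hleft (a : A) : g a = a * g 1 := by
        simpa [smul_eq] using map_smul g (a ⊗ₜ[K] (1 : Aᵐᵒᵖ)) 1
      have hright (a : A) : g a = g 1 * a := by
        simpa [smul_eq] using map_smul g ((1 : A) ⊗ₜ[K] MulOpposite.op a) 1
      obtain ⟨c, hc⟩ := (Algebra.IsCentral.mem_center_iff K).mp <|
        Subalgebra.mem_center_iff.mpr fun a ↦ (hleft a).symm.trans (hright a)
      rw [hright x, hright (f x), hc, ← Algebra.smul_def, ← Algebra.smul_def, map_smul]
    exact ⟨t, LinearMap.ext fun x ↦ (ht x).symm⟩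
  refine { bij := ⟨?_, hsurj⟩ }
  refine (LinearMap.injective_iff_surjective_of_finrank_eq_finrank
    (f := (AlgHom.mulLeftRight K A).toLinearMap) ?_).mpr hsurj
  rw [Module.finrank_tensorProduct, Module.finrank_linearMap,
    (MulOpposite.opLinearEquiv K : A ≃ₗ[K] Aᵐᵒᵖ).finrank_eq]

section TensorProduct

variable (K A S : Type*) [Field K] [Ring A] [Algebra K A] [CommRing S] [Algebra K S]

theorem isCentral_tensorProduct_right [Algebra.IsCentral K A] :
    Algebra.IsCentral S (A ⊗[K] S) where
  out t ht := by
    have hmem : t ∈ Subalgebra.centralizer K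
        (Algebra.TensorProduct.includeLeft : A →ₐ[K] A ⊗[K] S).range :=
      fun x _ ↦ Subalgebra.mem_center_iff.mp ht x
    rw [Subalgebra.centralizer_coe_range_includeLeft_eq_center_tensorProduct] at hmem
    obtain ⟨u, rfl⟩ := hmem
    clear ht
    induction u with
    | zero => exact zero_mem _
    | add u v hu hv => rw [map_add]; exact add_mem hu hv
    | tmul z s =>
      obtain ⟨c, hc⟩ := (Algebra.IsCentral.mem_center_iff K).mp z.2
      refine Algebra.mem_bot.mpr ⟨c • s, ?_⟩
      change (1 : A) ⊗ₜ[K] (c • s) = (z : A) ⊗ₜ[K] s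
      rw [hc, ← TensorProduct.smul_tmul, Algebra.algebraMap_eq_smul_one]

theorem finrank_tensorProduct_right [StrongRankCondition S] :
    Module.finrank S (A ⊗[K] S) = Module.finrank K A := by
  rw [← (Algebra.TensorProduct.commRight K S A).toLinearEquiv.finrank_eq, Module.finrank_baseChange]

end TensorProduct

section Splitting

section LeftRightAction

variable {K A S : Type*} [Field K] [Ring A] [Algebra K A] [CommRing S] [Algebra K S]

/-- The action of `A ⊗ S` on `A` in which `A` multiplies on the left and `S` multiplies on the
right through `ψ`. -/
noncomputable def leftRightAction (ψ : S →ₐ[K] A) : A ⊗[K] S →ₐ[K] Module.End K A :=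
  (AlgHom.mulLeftRight K A).comp <| Algebra.TensorProduct.map (AlgHom.id K A) <|
    ψ.toOpposite fun s t ↦ (Commute.all s t).map ψ

theorem leftRightAction_tmul (ψ : S →ₐ[K] A) (x y : A) (s : S) :
    leftRightAction ψ (x ⊗ₜ s) y = x * y * ψ s := by
  simp [leftRightAction]

theorem leftRightAction_injective [IsAzumaya K A] {ψ : S →ₐ[K] A} (hψ : Function.Injective ψ) :
    Function.Injective (leftRightAction ψ) := by
  refine (IsAzumaya.AlgHom.mulLeftRight_bij K A).injective.comp ?_
  exact Module.Flat.lTensor_preserves_injective_linearMap (M := A)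
    (ψ.toOpposite fun s t ↦ (Commute.all s t).map ψ).toLinearMap
    (MulOpposite.op_injective.comp hψ)

end LeftRightAction

variable {K D S : Type*} [Field K] [DivisionRing D] [Algebra K D] [FiniteDimensional K D]
  [Algebra.IsCentral K D] [Field S] [Algebra K S]

theorem nonempty_algEquiv_matrix_of_commute_centralizer (ψ : S →ₐ[K] D)
    (hψ : ∀ x ∈ Set.centralizer (Set.range ψ), ∀ y ∈ Set.centralizer (Set.range ψ), Commute x y)
    {r : ℕ} (hr : Module.finrank K D = r ^ 2) :
    Nonempty (D ⊗[K] S ≃ₐ[S] Matrix (Fin r) (Fin r) S) := by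
  let : Module (D ⊗[K] S) D := Module.compHom D (leftRightAction ψ).toRingHom
  let : Module S D := Module.compHom D (algebraMap S (D ⊗[K] S))
  have tmul_smul (x y : D) (s : S) : (x ⊗ₜ[K] s) • y = x * y * ψ s := leftRightAction_tmul ψ x y s
  have smul_eq (s : S) (y : D) : s • y = y * ψ s :=
    (tmul_smul 1 y s).trans (by rw [one_mul])
  have : IsScalarTower S (D ⊗[K] S) D := .of_algebraMap_smul fun _ _ ↦ rfl
  have : IsScalarTower K S D := .of_algebraMap_smul fun c y ↦ by
    rw [smul_eq, AlgHom.commutes, ← Algebra.commutes, Algebra.smul_def]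
  have : Module.Finite S D := .of_restrictScalars_finite K S D
  have := isAzumaya_of_isCentral_of_isSimpleRing K D
  have : FaithfulSMul (D ⊗[K] S) D :=
    ⟨fun h ↦ leftRightAction_injective ψ.injective (LinearMap.ext h)⟩
  have : IsSimpleModule (D ⊗[K] S) D := isSimpleModule_iff_toSpanSingleton_surjective.mpr
    ⟨inferInstance, fun x hx y ↦ ⟨(y * x⁻¹) ⊗ₜ 1, by simp [tmul_smul, hx]⟩⟩
  have := isCentral_tensorProduct_right K D S
  have apply_eq (g : Module.End (D ⊗[K] S) D) (x : D) : g x = x * g 1 := by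
    simpa [tmul_smul] using map_smul g (x ⊗ₜ[K] (1 : S)) 1
  have apply_one_mem (g : Module.End (D ⊗[K] S) D) : g 1 ∈ Set.centralizer (Set.range ψ) := by
    rintro _ ⟨s, rfl⟩
    have h := map_smul g ((1 : D) ⊗ₜ[K] s) 1
    rw [tmul_smul, tmul_smul, apply_eq] at h
    simpa using h
  refine nonempty_algEquiv_matrix_of_commute_end (M := D) (fun f g ↦ LinearMap.ext fun x ↦ ?_)
    (finrank_tensorProduct_right K D S ▸ hr)
  have h := hψ _ (apply_one_mem f) _ (apply_one_mem g)
  calc f (g x) = x * g 1 * f 1 := by rw [apply_eq f (g x), apply_eq g x]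
    _ = x * f 1 * g 1 := by rw [mul_assoc, ← h.eq, mul_assoc]
    _ = g (f x) := by rw [apply_eq g (f x), apply_eq f x]

end Splitting

section Separable

variable {F E : Type*} [Field F] [Ring E] [IsDomain E] [Algebra F E] [FiniteDimensional F E]

open scoped IsMulCommutative in
theorem isSeparable_of_mem_adjoin {T : Set E} (hcomm : ∀ x ∈ T, ∀ y ∈ T, x * y = y * x)
    (hsep : ∀ x ∈ T, IsSeparable F x) {x : E} (hx : x ∈ Algebra.adjoin F T) : IsSeparable F x := by
  have := Algebra.isMulCommutative_adjoin F hcomm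
  let : Field (Algebra.adjoin F T) := fieldOfFiniteDimensional F _
  have hle : Algebra.adjoin F T ≤
      (separableClosure F (Algebra.adjoin F T)).toSubalgebra.map (Algebra.adjoin F T).val :=
    Algebra.adjoin_le fun y hy ↦ ⟨⟨y, Algebra.subset_adjoin hy⟩,
      (isSeparable_map_iff (Algebra.adjoin F T).val Subtype.val_injective).mp (hsep y hy), rfl⟩
  obtain ⟨y, hy, rfl⟩ := hle hx
  exact IsSeparable.map (Algebra.adjoin F T).val Subtype.val_injective hy

theorem isSeparable_pow {x : E} (hx : IsSeparable F x) (n : ℕ) : IsSeparable F (x ^ n) :=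
  isSeparable_of_mem_adjoin (T := {x}) (by simp) (by simpa) <|
    pow_mem (Algebra.self_mem_adjoin_singleton F x) n

theorem isSeparable_pow_expChar_pow_finrank (q : ℕ) [ExpChar F q] (x : E) :
    IsSeparable F (x ^ q ^ Module.finrank F E) := by
  have hx : IsIntegral F x := .of_finite F x
  obtain ⟨g, hg, m, hm⟩ := (minpoly.irreducible hx).hasSeparableContraction q
  have hsep : IsSeparable F (x ^ q ^ m) := hg.of_dvd <| minpoly.dvd F _ <| by
    simpa only [Polynomial.expand_aeval, minpoly.aeval] using congr_arg (Polynomial.aeval x) hm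
  obtain rfl | hq := (show 1 ≤ q from expChar_pos F q).eq_or_lt
  · simpa using hsep
  have hdeg : (minpoly F x).natDegree = g.natDegree * q ^ m := by
    rw [← hm, Polynomial.natDegree_expand]
  have hmn : m ≤ Module.finrank F E := calc
    m ≤ q ^ m := (Nat.lt_pow_self hq).le
    _ ≤ (minpoly F x).natDegree :=
      Nat.le_of_dvd (minpoly.natDegree_pos hx) (hdeg ▸ dvd_mul_left _ _)
    _ ≤ Module.finrank F E := minpoly.natDegree_le x
  rw [← Nat.add_sub_cancel' hmn, pow_add, pow_mul]
  exact isSeparable_pow hsep _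

end Separable

section Polynomial

open Polynomial

theorem coeff_mem_of_forall_eval_mem {F E : Type*} [Field F] [Infinite F] [Ring E]
    [Algebra F E] (W : Submodule F E) (p : E[X])
    (hp : ∀ x : F, p.eval (algebraMap F E x) ∈ W) (i : ℕ) : p.coeff i ∈ W := by
  by_contra hi
  obtain ⟨f, hfi, hWf⟩ := Submodule.exists_le_ker_of_notMem hi
  let q : F[X] := ∑ j ∈ p.support, monomial j (f (p.coeff j))
  have hcoeff : q.coeff i = f (p.coeff i) := by
    simp +contextual [q, coeff_monomial]
  have heval (x : F) : q.eval x = f (p.eval (algebraMap F E x)) := by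
    rw [eval_finsetSum, eval_eq_sum, Polynomial.sum, map_sum]
    refine Finset.sum_congr rfl fun j _ ↦ ?_
    rw [eval_monomial, ← map_pow, ← Algebra.commutes, ← Algebra.smul_def, map_smul, smul_eq_mul,
      mul_comm]
  have hq : q = 0 := Polynomial.funext fun x ↦ by rw [heval, eval_zero]; exact hWf (hp x)
  exact hfi (by rw [← hcoeff, hq, coeff_zero])

theorem eval_C_add_C_mul_X_pow {E : Type*} [Ring E] (s t : E) {z : E}
    (hz : z ∈ Subring.center E) (n : ℕ) : ((C s + C t * X) ^ n).eval z = (s + t * z) ^ n := by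
  let ev : E[X] →+* E :=
    eval₂RingHom' (RingHom.id E) z fun a ↦ Subring.mem_center_iff.mp hz a
  have hev (p : E[X]) : ev p = p.eval z := rfl
  rw [← hev, map_pow]
  congr 1
  simp [hev]

theorem eval_mem_of_forall_coeff_mem {E : Type*} [Ring E] {R : Subring E} {p : E[X]}
    (hp : ∀ i, p.coeff i ∈ R) {z : E} (hz : z ∈ R) : p.eval z ∈ R := by
  rw [eval_eq_sum]
  exact sum_mem fun i _ ↦ mul_mem (hp i) (pow_mem hz i)

theorem add_mul_pow_mem_center_of_forall {F E : Type*} [Field F] [Infinite F] [Ring E]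
    [Algebra F E] {s t z : E} (hz : z ∈ Subring.center E) {n : ℕ}
    (h : ∀ c : F, (s + t * algebraMap F E c) ^ n ∈ Subring.center E) :
    (s + t * z) ^ n ∈ Subring.center E := by
  rw [← eval_C_add_C_mul_X_pow s t hz]
  refine eval_mem_of_forall_coeff_mem (coeff_mem_of_forall_eval_mem
    (Subalgebra.toSubmodule (Subalgebra.center F E)) _ fun c ↦ ?_) hz
  rw [eval_C_add_C_mul_X_pow s t (Set.algebraMap_mem_center c)]
  exact h c

end Polynomial

theorem center_eq_top_of_forall_pow_expChar_pow_mem {E : Type*} [DivisionRing E] (q n : ℕ)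
    [ExpChar E q] (h : ∀ x : E, x ^ q ^ n ∈ Subring.center E) : Subring.center E = ⊤ := by
  by_contra hE
  have : ExpChar (Subring.center E) q := (ExpChar.expChar_center_iff (R := E)).mpr ‹_›
  have : IsPurelyInseparable (Subring.center E) E :=
    (isPurelyInseparable_iff_pow_mem (Subring.center E) q).mpr fun x ↦ ⟨n, ⟨_, h x⟩, rfl⟩
  obtain ⟨x, hx, hsep⟩ := JacobsonNoether.exists_separable_and_not_isCentral E hE
  obtain ⟨y, rfl⟩ := IsPurelyInseparable.inseparable _ x hsep
  exact hx y.2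

section Involution

theorem exists_isSelfAdjoint_eq_add_mul {E : Type*} [DivisionRing E] [StarRing E] {z : E}
    (hz : z ∈ Set.center E) (hne : ¬ IsSelfAdjoint z) (x : E) :
    ∃ s t : E, IsSelfAdjoint s ∧ IsSelfAdjoint t ∧ x = s + t * z := by
  have hz' : star z ∈ Set.center E := Set.star_mem_center hz
  have hw0 : z - star z ≠ 0 := sub_ne_zero.mpr (Ne.symm hne)
  have hw : z - star z ∈ Set.center E := (Subring.center E).sub_mem hz hz'
  have hwi : (z - star z)⁻¹ ∈ Set.center E := Set.inv_mem_center hw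
  let t := (x - star x) * (z - star z)⁻¹
  have ht : IsSelfAdjoint t := by
    have hstar : star (z - star z)⁻¹ = -(z - star z)⁻¹ := by
      rw [star_inv₀, star_sub, star_star, ← neg_sub, inv_neg]
    rw [isSelfAdjoint_iff, star_mul, hstar, star_sub, star_star, neg_mul, hwi.comm, ← neg_mul,
      neg_sub]
  have htz : t * (z - star z) = x - star x := inv_mul_cancel_right₀ hw0 _
  refine ⟨x - t * z, t, ?_, ht, by simp⟩
  rw [isSelfAdjoint_iff, star_sub, star_mul, ht.star_eq, hz'.comm, sub_eq_sub_iff_sub_eq_sub,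
    ← neg_sub, ← htz]
  noncomm_ring

variable {F E : Type*} [Field F] [StarRing F] [TrivialStar F] [DivisionRing E] [Algebra F E]
  [StarRing E] [StarModule F E]

theorem pow_mem_center_of_forall_isSelfAdjoint [Infinite F] {z : E} (hz : z ∈ Subring.center E)
    (hne : ¬ IsSelfAdjoint z) {n : ℕ}
    (h : ∀ s : E, IsSelfAdjoint s → s ^ n ∈ Subring.center E) (x : E) :
    x ^ n ∈ Subring.center E := by
  obtain ⟨s, t, hs, ht, rfl⟩ := exists_isSelfAdjoint_eq_add_mul hz hne x
  refine add_mul_pow_mem_center_of_forall (F := F) hz fun c ↦ h _ (hs.add ?_)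
  rw [← Algebra.commutes, ← Algebra.smul_def]
  exact (IsSelfAdjoint.all c).smul ht

theorem center_eq_top_of_forall_isSelfAdjoint [FiniteDimensional F E] (q n : ℕ) [ExpChar F q]
    {z : E} (hz : z ∈ Subring.center E) (hne : ¬ IsSelfAdjoint z)
    (h : ∀ s : E, IsSelfAdjoint s → s ^ q ^ n ∈ Subring.center E) : Subring.center E = ⊤ := by
  cases finite_or_infinite F
  · have : Finite E := Module.finite_of_finite F
    let := littleWedderburn E
    exact eq_top_iff.mpr fun x _ ↦ Subring.mem_center_iff.mpr fun y ↦ mul_comm y x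
  · have : ExpChar E q := expChar_of_injective_algebraMap (algebraMap F E).injective q
    exact center_eq_top_of_forall_pow_expChar_pow_mem q n
      (pow_mem_center_of_forall_isSelfAdjoint (F := F) hz hne h)

end Involution

section SymmetricSeparable

variable {F E : Type*} [Field F] [Ring E] [Algebra F E]

variable (F E) in
theorem wellFoundedGT_subalgebra [FiniteDimensional F E] : WellFoundedGT (Subalgebra F E) :=
  StrictMono.wellFoundedGT (f := Subalgebra.toSubmodule (R := F) (A := E)) fun _ _ h ↦ h

variable [StarRing E]

/-- A subalgebra of an algebra with involution is symmetric separable if the involution fixes all of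
its elements and these are separable over the base field. Such a subalgebra is commutative. -/
def IsSymmetricSeparable (A : Subalgebra F E) : Prop :=
  ∀ x ∈ A, IsSelfAdjoint x ∧ IsSeparable F x

theorem IsSymmetricSeparable.commute {A : Subalgebra F E} (hA : IsSymmetricSeparable A) {x y : E}
    (hx : x ∈ A) (hy : y ∈ A) : Commute x y :=
  ((hA x hx).1.commute_iff (hA y hy).1).mpr (hA _ (mul_mem hx hy)).1

open scoped IsMulCommutative in
/-- A symmetric separable subalgebra of a finite-dimensional domain is a field. -/
noncomputable abbrev IsSymmetricSeparable.field [IsDomain E] [FiniteDimensional F E]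
    {A : Subalgebra F E} (hA : IsSymmetricSeparable A) : Field A :=
  have : IsMulCommutative A := ⟨⟨fun x y ↦ Subtype.ext (hA.commute x.2 y.2)⟩⟩
  fieldOfFiniteDimensional F A

variable [StarRing F] [TrivialStar F] [StarModule F E]

theorem isSelfAdjoint_of_mem_adjoin {T : Set E} (hcomm : ∀ x ∈ T, ∀ y ∈ T, x * y = y * x)
    (hT : ∀ x ∈ T, IsSelfAdjoint x) {x : E} (hx : x ∈ Algebra.adjoin F T) : IsSelfAdjoint x := by
  have := Algebra.isMulCommutative_adjoin F hcomm
  induction hx using Algebra.adjoin_induction with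
  | mem y hy => exact hT y hy
  | algebraMap c => exact (IsSelfAdjoint.all c).algebraMap E
  | add y z _ _ hy hz => exact hy.add hz
  | mul y z hy hz ihy ihz => exact (ihy.commute_iff ihz).mp (setLike_mul_comm hy hz)

theorem isSymmetricSeparable_bot : IsSymmetricSeparable (⊥ : Subalgebra F E) := by
  intro x hx
  obtain ⟨c, rfl⟩ := Algebra.mem_bot.mp hx
  exact ⟨(IsSelfAdjoint.all c).algebraMap E, isSeparable_algebraMap c⟩

variable [FiniteDimensional F E]

variable (F E) in
theorem exists_maximal_isSymmetricSeparable :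
    ∃ A : Subalgebra F E, Maximal IsSymmetricSeparable A := by
  have := wellFoundedGT_subalgebra F E
  obtain ⟨A, -, hA⟩ := exists_maximal_ge_of_wellFoundedGT _ _
    (isSymmetricSeparable_bot (F := F) (E := E))
  exact ⟨A, hA⟩

variable [IsDomain E]

theorem mem_of_maximal_isSymmetricSeparable {A : Subalgebra F E}
    (hA : Maximal IsSymmetricSeparable A) {s : E} (hs : IsSelfAdjoint s) (hsep : IsSeparable F s)
    (hcomm : s ∈ Set.centralizer A) : s ∈ A := by
  have hT : ∀ x ∈ insert s (A : Set E), ∀ y ∈ insert s (A : Set E), x * y = y * x := by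
    rintro x (rfl | hx) y (rfl | hy)
    exacts [rfl, (hcomm y hy).symm, hcomm x hx, hA.prop.commute hx hy]
  have hadjoin : IsSymmetricSeparable (Algebra.adjoin F (insert s (A : Set E))) := fun x hx ↦
    ⟨isSelfAdjoint_of_mem_adjoin hT
      (Set.forall_mem_insert.mpr ⟨hs, fun y hy ↦ (hA.prop y hy).1⟩) hx,
    isSeparable_of_mem_adjoin hT
      (Set.forall_mem_insert.mpr ⟨hsep, fun y hy ↦ (hA.prop y hy).2⟩) hx⟩
  exact hA.le_of_ge hadjoin (fun x hx ↦ Algebra.subset_adjoin (Set.mem_insert_of_mem s hx))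
    (Algebra.subset_adjoin (Set.mem_insert s A))

theorem commute_of_maximal_isSymmetricSeparable {A : Subalgebra F E}
    (hA : Maximal IsSymmetricSeparable A) {z : E} (hz : z ∈ Set.center E) (hne : ¬ IsSelfAdjoint z)
    {x y : E} (hx : x ∈ Set.centralizer A) (hy : y ∈ Set.centralizer A) : Commute x y := by
  obtain ⟨q, _⟩ := ExpChar.exists F
  set n := Module.finrank F E
  let C : StarSubalgebra F E := .centralizer F A
  have mem_C {x : E} : x ∈ C ↔ x ∈ Set.centralizer (A : Set E) := by
    refine (StarSubalgebra.mem_centralizer_iff F).trans <| forall₂_congr fun y hy ↦ ?_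
    rw [(hA.prop y hy).1.star_eq, and_self]
  have : IsDomain C := C.toSubalgebra.isDomain
  have : FiniteDimensional F C := .finiteDimensional_subalgebra C.toSubalgebra
  let : DivisionRing C := divisionRingOfFiniteDimensional F C
  let zC : C := ⟨z, mem_C.mpr (Set.center_subset_centralizer _ hz)⟩
  have hzC : zC ∈ Subring.center C :=
    Subring.mem_center_iff.mpr fun c ↦ Subtype.ext (hz.comm (c : E)).symm.eq
  have hzC_ne : ¬ IsSelfAdjoint zC := fun h ↦ hne (congrArg Subtype.val h)
  have pow_mem_center (s : C) (hs : IsSelfAdjoint s) : s ^ q ^ n ∈ Subring.center C := by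
    have hsE : IsSelfAdjoint (s : E) := congrArg Subtype.val hs
    have hsA : (s : E) ^ q ^ n ∈ A := mem_of_maximal_isSymmetricSeparable hA (hsE.pow _)
      (isSeparable_pow_expChar_pow_finrank q (s : E)) (mem_C.mp (pow_mem s.2 _))
    exact Subring.mem_center_iff.mpr fun c ↦ Subtype.ext (mem_C.mp c.2 _ hsA).symm
  have hxC : (⟨x, mem_C.mpr hx⟩ : C) ∈ Subring.center C :=
    center_eq_top_of_forall_isSelfAdjoint (F := F) q n hzC hzC_ne pow_mem_center ▸
      Subring.mem_top _
  exact (congrArg Subtype.val (Subring.mem_center_iff.mp hxC ⟨y, mem_C.mpr hy⟩)).symm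

end SymmetricSeparable

section LinearDisjoint

theorem exists_eq_one_tmul_add_tmul {k K V : Type*} [Field k] [Ring K] [Nontrivial K] [Algebra k K]
    [AddCommGroup V] [Module k V] (hK : Module.finrank k K = 2) {α : K}
    (hα : α ∉ (⊥ : Subalgebra k K)) (t : K ⊗[k] V) : ∃ x y : V, t = 1 ⊗ₜ x + α ⊗ₜ y := by
  have hli : LinearIndependent k ![1, α] := by
    refine (LinearIndependent.pair_iff' one_ne_zero).mpr fun c hc ↦ hα ?_
    exact Algebra.mem_bot.mpr ⟨c, by rw [Algebra.algebraMap_eq_smul_one, hc]⟩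
  let b := basisOfLinearIndependentOfCardEqFinrank hli (by simp [hK])
  obtain ⟨c, rfl⟩ := TensorProduct.eq_repr_basis_left b t
  exact ⟨c 0, c 1, by simp [Finsupp.sum_fintype, b]⟩

variable {k K D F : Type*} [Field k] [StarRing k] [TrivialStar k] [Field K] [Algebra k K]
  [Ring D] [IsDomain D] [StarRing D] [Algebra k D] [StarModule k D] [Algebra K D]
  [IsScalarTower k K D] [Ring F] [Algebra k F]

theorem liftEquiv_injective_of_forall_isSelfAdjoint (hK : Module.finrank k K = 2) {α : K}
    (hα : ¬ IsSelfAdjoint (algebraMap K D α)) {φ : F →ₐ[k] D} (hinj : Function.Injective φ)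
    (hφ : ∀ x, IsSelfAdjoint (φ x)) :
    Function.Injective (φ.liftEquiv k K F D) := by
  have hαk : α ∉ (⊥ : Subalgebra k K) := fun h ↦ by
    obtain ⟨c, rfl⟩ := Algebra.mem_bot.mp h
    rw [← IsScalarTower.algebraMap_apply] at hα
    exact hα ((IsSelfAdjoint.all c).algebraMap D)
  refine (injective_iff_map_eq_zero _).mpr fun t ht ↦ ?_
  obtain ⟨x, y, rfl⟩ := exists_eq_one_tmul_add_tmul hK hαk t
  have h : φ x + φ y * algebraMap K D α = 0 := by
    simpa [Algebra.smul_def, Algebra.commutes] using ht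
  have hstar : φ x + φ y * star (algebraMap K D α) = 0 := by
    have h' := congr(star $h)
    rwa [star_add, star_mul, (hφ x).star_eq, (hφ y).star_eq, star_zero,
      (Set.star_mem_center (Set.algebraMap_mem_center α)).comm] at h'
  have hy : φ y * (algebraMap K D α - star (algebraMap K D α)) = 0 := by
    rw [mul_sub, sub_eq_zero, ← add_right_inj, h, hstar]
  have hy0 : φ y = 0 := (mul_eq_zero.mp hy).resolve_right (sub_ne_zero.mpr (Ne.symm hα))
  have hx0 : φ x = 0 := by simpa [hy0] using h
  rw [(map_eq_zero_iff φ hinj).mp hx0, (map_eq_zero_iff φ hinj).mp hy0, TensorProduct.tmul_zero,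
    TensorProduct.tmul_zero, add_zero]

end LinearDisjoint

/-- Let `k` be a field, `K` a separable field extension of
`k` with `[K:k] = 2`, and `D` a finite-dimensional central division algebra
over `K` with `dim_K D = r²`.  Suppose `σ : D → D` is an involution of the
second kind: `σ` is additive, satisfies `σ(xy) = σ(y)σ(x)` and `σ(σ(x)) = x`,
maps `K` to `K`, fixes `k` pointwise, and does not fix `K` pointwise.  Then
there exists a finite separable field extension `F` of `k` such that
`L := K ⊗_k F` is a field and the `L`-algebra `D ⊗_K L` is isomorphic to the
matrix algebra `M_r(L)` of `r × r` matrices over `L`. -/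
theorem exists_separable_splitting_field_of_involution_second_kind
    (k : Type u) [Field k] (K : Type u) [Field K] [Algebra k K]
    (hK2 : Module.finrank k K = 2) [Algebra.IsSeparable k K]
    (D : Type u) [DivisionRing D] [Algebra K D] [FiniteDimensional K D]
    [Algebra.IsCentral K D] (r : ℕ) (hr : Module.finrank K D = r ^ 2)
    [Algebra k D] [IsScalarTower k K D]
    (σ : D → D)
    (hadd : ∀ x y : D, σ (x + y) = σ x + σ y)
    (hmul : ∀ x y : D, σ (x * y) = σ y * σ x)
    (hinv : ∀ x : D, σ (σ x) = x)
    (hKK : ∀ x : K, ∃ y : K, σ (algebraMap K D x) = algebraMap K D y)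
    (hk : ∀ c : k, σ (algebraMap k D c) = algebraMap k D c)
    (hsecond : ¬ ∀ x : K, σ (algebraMap K D x) = algebraMap K D x) :
    ∃ (F : Type u) (_ : Field F) (_ : Algebra k F),
      FiniteDimensional k F ∧ Algebra.IsSeparable k F ∧
      IsField (K ⊗[k] F) ∧
      Nonempty ((D ⊗[K] (K ⊗[k] F)) ≃ₐ[K ⊗[k] F] Matrix (Fin r) (Fin r) (K ⊗[k] F)) := by
  have : FiniteDimensional k K := .of_finrank_pos (by simp [hK2])
  have : FiniteDimensional k D := .trans k K D
  let : StarRing k := starRingOfComm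
  have : TrivialStar k := ⟨fun _ ↦ rfl⟩
  let : StarRing D := { star := σ, star_involutive := hinv, star_mul := hmul, star_add := hadd }
  have : StarModule k D := ⟨fun c x ↦ show σ (c • x) = c • σ x by
    rw [Algebra.smul_def, hmul, hk, ← Algebra.commutes, ← Algebra.smul_def]⟩
  obtain ⟨α, hα⟩ : ∃ α : K, ¬ IsSelfAdjoint (algebraMap K D α) := not_forall.mp hsecond
  obtain ⟨F, hF⟩ := exists_maximal_isSymmetricSeparable k D
  let : Field F := hF.prop.field
  let ψ : K ⊗[k] F →ₐ[K] D := F.val.liftEquiv k K F D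
  have hψ : Function.Injective ψ := liftEquiv_injective_of_forall_isSelfAdjoint hK2 hα
    Subtype.val_injective fun x ↦ (hF.prop x x.2).1
  have : IsDomain (K ⊗[k] F) := hψ.isDomain ψ.toRingHom
  have hL : IsField (K ⊗[k] F) := isField_of_isIntegral_of_isField' (Field.toIsField K)
  let := hL.toField
  have hle : Set.centralizer (Set.range ψ) ⊆ Set.centralizer F :=
    Set.centralizer_subset fun x hx ↦ ⟨1 ⊗ₜ ⟨x, hx⟩, by simp [ψ]⟩
  refine ⟨F, inferInstance, inferInstance, inferInstance, ⟨fun x ↦ ?_⟩, hL, ?_⟩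
  · exact (isSeparable_map_iff F.val Subtype.val_injective).mp (hF.prop x x.2).2
  · exact nonempty_algEquiv_matrix_of_commute_centralizer ψ (fun x hx y hy ↦
      commute_of_maximal_isSymmetricSeparable hF (Set.algebraMap_mem_center α) hα
        (hle hx) (hle hy)) hr
end
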